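/- Under the bounded-data assumption, the Hessian of the logistic empirical risk of the multi-head attention model satisfies the spectral-norm bound ‖∇²L̂(θ̃)‖ ≤ β3(θ̃)/√H + β1(θ̃)²/4 for every θ̃ ∈ R^{H(Td+d²)}, where β1(θ̃) := √T · R · (2R² ‖θ̃‖_{2,∞} + 1) and β3(θ̃) := 2 d √(T d) · R³ · (3 √d · R² ‖θ̃‖_{2,∞} + 1). -/

import Mathlib

/-!
Restrict the risk to a line `s ↦ θ + s v`. In one attention row the logits are then affine in `s`,
with slopes `b` bounded by `β = R² ‖B‖_F`, where `B` is the `W`-part of the direction. If `q(s)` is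
the softmax weight vector and `m = Σ q b` the mean slope, then
`q' = q (b - m)` and `q'' = q ((b - m)² - m')` with `|m'| ≤ 2 β²`, so `q'` and `q''` have
`ℓ¹`-norms at most `2 β` and `6 β²`. The row output `Σ q (c + s α)` therefore has first derivative
at most `2 β γ + δ` and second derivative at most `6 β² γ + 4 β δ`, where `|c| ≤ γ`, `|α| ≤ δ`
(`rowJet`).

Summing over rows with Cauchy–Schwarz gives, for each head, the bounds `β₁ ‖v_h‖` and
`β₃ ‖v_h‖²` (`headJet`). Summing over heads with the factor `1 / √H` gives `β₁ ‖v‖` and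
`β₃ ‖v‖² / √H` (`mhJet`). Finally the logistic loss has slope at most `1` and curvature at most
`1/4` (`TwoJet.logistic`), and averaging over the samples preserves the bound.
-/

open Finset
open scoped RealInnerProductSpace

/-- The softmax map `φ : ℝ^T → ℝ^T`, `φ(v)_t = exp(v_t) / Σ_s exp(v_s)`. -/
noncomputable def smax {T : ℕ} (v : Fin T → ℝ) : Fin T → ℝ :=
  fun t => Real.exp (v t) / ∑ s, Real.exp (v s)

/-- The softmax logits: the `(t, s)` entry of `X W Xᵀ`, i.e. `xₜᵀ W x_s`. -/
noncomputable def attnScores {T d : ℕ} (X : Fin T → Fin d → ℝ)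
    (W : Fin d → Fin d → ℝ) (t : Fin T) : Fin T → ℝ :=
  fun s => ∑ j, ∑ k, X t j * W j k * X s k

/-- The single-head attention model `Φ(X; U, W) = ⟨U, φ(X W Xᵀ) X⟩`. -/
noncomputable def attnPhi {T d : ℕ} (X U : Fin T → Fin d → ℝ)
    (W : Fin d → Fin d → ℝ) : ℝ :=
  ∑ t, ∑ t', smax (attnScores X W t) t' * ∑ j, U t j * X t' j

/-- Index set for the parameters `θ_h = concat(U_h, W_h) ∈ ℝ^{Td + d²}` of one head. -/
abbrev HeadIx (T d : ℕ) := (Fin T × Fin d) ⊕ (Fin d × Fin d)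

/-- Parameter space `ℝ^{H(Td + d²)}` of the `H`-head model, with Euclidean norm. -/
abbrev Params (T d H : ℕ) := EuclideanSpace ℝ (Fin H × HeadIx T d)

/-- The matrix `U_h` of the `h`-th head. -/
noncomputable def headU {T d H : ℕ} (θ : Params T d H) (h : Fin H) :
    Fin T → Fin d → ℝ := fun t j => θ (h, Sum.inl (t, j))

/-- The matrix `W_h` of the `h`-th head. -/
noncomputable def headW {T d H : ℕ} (θ : Params T d H) (h : Fin H) :
    Fin d → Fin d → ℝ := fun j k => θ (h, Sum.inr (j, k))

/-- The multi-head attention model `Φ̃(X; θ̃) = (1/√H) Σ_h Φ(X; U_h, W_h)`. -/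
noncomputable def mhPhi {T d H : ℕ} (X : Fin T → Fin d → ℝ) (θ : Params T d H) : ℝ :=
  (1 / Real.sqrt H) * ∑ h, attnPhi X (headU θ h) (headW θ h)

/-- The logistic empirical risk `L̂(θ̃) = (1/n) Σᵢ log(1 + exp(−yᵢ Φ̃(Xᵢ; θ̃)))`. -/
noncomputable def empLoss {T d H n : ℕ} (X : Fin n → Fin T → Fin d → ℝ)
    (y : Fin n → ℝ) (θ : Params T d H) : ℝ :=
  (1 / (n : ℝ)) * ∑ i, Real.log (1 + Real.exp (-(y i * mhPhi (X i) θ)))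

/-- `‖θ̃‖_{2,∞} = max_h ‖θ_h‖`: the maximum Euclidean norm over heads. -/
noncomputable def maxHeadNorm {T d H : ℕ} (θ : Params T d H) : ℝ :=
  ⨆ h : Fin H, Real.sqrt (∑ p : HeadIx T d, θ (h, p) ^ 2)

/-- Bounded-data assumption: `R ≥ 1`, labels in `{±1}`, and every token has
Euclidean norm at most `R`. -/
def BoundedData {T d n : ℕ} (X : Fin n → Fin T → Fin d → ℝ)
    (y : Fin n → ℝ) (R : ℝ) : Prop :=
  1 ≤ R ∧ (∀ i, y i = 1 ∨ y i = -1) ∧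
    ∀ i t, Real.sqrt (∑ j, X i t j ^ 2) ≤ R

/-- `β₁(θ̃) = √T R (2R² ‖θ̃‖_{2,∞} + 1)`. -/
noncomputable def beta1 {T d H : ℕ} (R : ℝ) (θ : Params T d H) : ℝ :=
  Real.sqrt T * R * (2 * R ^ 2 * maxHeadNorm θ + 1)

/-- `β₃(θ̃) = 2 d √(T d) R³ (3 √d R² ‖θ̃‖_{2,∞} + 1)`. -/
noncomputable def beta3 {T d H : ℕ} (R : ℝ) (θ : Params T d H) : ℝ :=
  2 * (d : ℝ) * Real.sqrt ((T : ℝ) * d) * R ^ 3 *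
    (3 * Real.sqrt d * R ^ 2 * maxHeadNorm θ + 1)

/-- `F` is twice differentiable on `ℝ`, with `|F'(0)| ≤ a` and `|F''(0)| ≤ b`. -/
def TwoJet (F : ℝ → ℝ) (a b : ℝ) : Prop :=
  ∃ F' F'' : ℝ → ℝ, (∀ s, HasDerivAt F (F' s) s) ∧ (∀ s, HasDerivAt F' (F'' s) s) ∧
    |F' 0| ≤ a ∧ |F'' 0| ≤ b

lemma TwoJet.mono {F : ℝ → ℝ} {a b a' b' : ℝ} (h : TwoJet F a b) (ha : a ≤ a') (hb : b ≤ b') :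
    TwoJet F a' b' := by
  obtain ⟨F', F'', h1, h2, h3, h4⟩ := h
  exact ⟨F', F'', h1, h2, h3.trans ha, h4.trans hb⟩

lemma TwoJet.sum {ι : Type*} [Fintype ι] {F : ι → ℝ → ℝ} {a b : ι → ℝ}
    (h : ∀ i, TwoJet (F i) (a i) (b i)) :
    TwoJet (fun s => ∑ i, F i s) (∑ i, a i) (∑ i, b i) := by
  choose F' F'' h1 h2 h3 h4 using h
  refine ⟨fun s => ∑ i, F' i s, fun s => ∑ i, F'' i s, fun s => ?_, fun s => ?_, ?_, ?_⟩
  · exact HasDerivAt.fun_sum fun i _ => h1 i s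
  · exact HasDerivAt.fun_sum fun i _ => h2 i s
  · exact (Finset.abs_sum_le_sum_abs _ _).trans (Finset.sum_le_sum fun i _ => h3 i)
  · exact (Finset.abs_sum_le_sum_abs _ _).trans (Finset.sum_le_sum fun i _ => h4 i)

lemma TwoJet.const_mul {F : ℝ → ℝ} {a b : ℝ} (h : TwoJet F a b) {k : ℝ} (hk : 0 ≤ k) :
    TwoJet (fun s => k * F s) (k * a) (k * b) := by
  obtain ⟨F', F'', h1, h2, h3, h4⟩ := h
  refine ⟨fun s => k * F' s, fun s => k * F'' s, fun s => (h1 s).const_mul k,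
    fun s => (h2 s).const_mul k, ?_, ?_⟩
  · rw [abs_mul, abs_of_nonneg hk]; gcongr
  · rw [abs_mul, abs_of_nonneg hk]; gcongr

lemma TwoJet.iteratedDeriv_le {F : ℝ → ℝ} {a b : ℝ} (h : TwoJet F a b) :
    |iteratedDeriv 2 F 0| ≤ b := by
  obtain ⟨F', F'', h1, h2, -, h4⟩ := h
  have e : deriv F = F' := funext fun s => (h1 s).deriv
  have : iteratedDeriv 2 F 0 = F'' 0 := by
    rw [iteratedDeriv_succ, iteratedDeriv_one, e, (h2 0).deriv]
  rwa [this]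

/-- Composition with the logistic loss: its first derivative `-y σ` satisfies `|y σ| ≤ 1` and its
second derivative `σ (1 - σ)` lies in `[0, 1/4]`, where `σ = e / (1 + e)`, `e = exp (-y Φ)`. -/
lemma TwoJet.logistic {F : ℝ → ℝ} {a b y : ℝ} (h : TwoJet F a b) (hy : y = 1 ∨ y = -1) :
    TwoJet (fun s => Real.log (1 + Real.exp (-(y * F s)))) a (b + a ^ 2 / 4) := by
  obtain ⟨F', F'', h1, h2, h3, h4⟩ := h
  have hy2 : y ^ 2 = 1 := by rcases hy with rfl | rfl <;> norm_num
  have hya : |y| = 1 := by rcases hy with rfl | rfl <;> norm_num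
  let e : ℝ → ℝ := fun s => Real.exp (-(y * F s))
  have he : ∀ s, 0 < e s := fun s => Real.exp_pos _
  have hed : ∀ s, HasDerivAt e (e s * (-(y * F' s))) s := fun s =>
    (((h1 s).const_mul y).neg).exp
  have hσ0 : 0 ≤ e 0 / (1 + e 0) := by have := he 0; positivity
  have hσ1 : e 0 / (1 + e 0) ≤ 1 := by
    have := he 0
    rw [div_le_one (by positivity)]; linarith
  refine ⟨fun s => -(y * F' s) * (e s / (1 + e s)),
    fun s => -(y * F'' s) * (e s / (1 + e s)) + F' s ^ 2 * (e s / (1 + e s) ^ 2),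
    fun s => ?_, fun s => ?_, ?_, ?_⟩
  · have hp : 1 + e s ≠ 0 := by have := he s; positivity
    have := ((hed s).const_add 1).log hp
    refine this.congr_deriv ?_
    ring
  · have hp : 1 + e s ≠ 0 := by have := he s; positivity
    have := (((h2 s).const_mul y).neg).mul ((hed s).div ((hed s).const_add 1) hp)
    refine this.congr_deriv ?_
    simp only [Pi.neg_apply, Pi.div_apply]
    field_simp
    linear_combination (e s * F' s ^ 2) * hy2
  · simp only [abs_mul, abs_neg, hya, one_mul, abs_of_nonneg hσ0]
    exact (mul_le_of_le_one_right (abs_nonneg _) hσ1).trans h3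
  · refine (abs_add_le _ _).trans (add_le_add ?_ ?_)
    · simp only [abs_mul, abs_neg, hya, one_mul, abs_of_nonneg hσ0]
      exact (mul_le_of_le_one_right (abs_nonneg _) hσ1).trans h4
    · have hq : e 0 / (1 + e 0) ^ 2 ≤ 1 / 4 := by
        have := he 0
        rw [div_le_div_iff₀ (by positivity) (by norm_num)]
        nlinarith [sq_nonneg (1 - e 0)]
      have hq0 : 0 ≤ e 0 / (1 + e 0) ^ 2 := by have := he 0; positivity
      rw [abs_of_nonneg (by positivity)]
      have : F' 0 ^ 2 ≤ a ^ 2 := sq_le_sq.2 (h3.trans (le_abs_self a))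
      calc _ ≤ a ^ 2 * (1 / 4) := by gcongr
        _ = _ := by ring

/-! ### Softmax along a line -/

lemma smax_nonneg {T : ℕ} (v : Fin T → ℝ) (t : Fin T) : 0 ≤ smax v t := by
  unfold smax; positivity

lemma sum_smax_le_one {T : ℕ} (v : Fin T → ℝ) : ∑ t, smax v t ≤ 1 := by
  unfold smax
  rw [← Finset.sum_div]
  exact div_self_le_one _

lemma abs_sum_smax_mul_le {T : ℕ} (v g : Fin T → ℝ) {γ : ℝ} (hγ : 0 ≤ γ)
    (hg : ∀ t, |g t| ≤ γ) : |∑ t, smax v t * g t| ≤ γ := by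
  calc |∑ t, smax v t * g t| ≤ ∑ t, smax v t * γ := by
        refine (Finset.abs_sum_le_sum_abs _ _).trans (Finset.sum_le_sum fun t _ => ?_)
        rw [abs_mul, abs_of_nonneg (smax_nonneg v t)]
        exact mul_le_mul_of_nonneg_left (hg t) (smax_nonneg v t)
    _ = (∑ t, smax v t) * γ := by rw [Finset.sum_mul]
    _ ≤ 1 * γ := by gcongr; exact sum_smax_le_one v
    _ = γ := one_mul γ

lemma hasDerivAt_smax {T : ℕ} (z b : Fin T → ℝ) (t : Fin T) (s : ℝ) :
    HasDerivAt (fun s => smax (fun r => z r + s * b r) t)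
      (smax (fun r => z r + s * b r) t *
        (b t - ∑ r, smax (fun r => z r + s * b r) r * b r)) s := by
  have hE : ∀ r, HasDerivAt (fun s : ℝ => Real.exp (z r + s * b r))
      (Real.exp (z r + s * b r) * b r) s := fun r => by
    have := (((hasDerivAt_id s).mul_const (b r)).const_add (z r)).exp
    simpa using this
  have hpos : 0 < ∑ r, Real.exp (z r + s * b r) :=
    Finset.sum_pos (fun r _ => Real.exp_pos _) ⟨t, Finset.mem_univ t⟩
  have hS := HasDerivAt.fun_sum (u := Finset.univ) fun r _ => hE r
  refine ((hE t).div hS hpos.ne').congr_deriv ?_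
  have hm : ∑ r, smax (fun r => z r + s * b r) r * b r =
      (∑ r, Real.exp (z r + s * b r) * b r) / ∑ r, Real.exp (z r + s * b r) := by
    rw [Finset.sum_div]
    exact Finset.sum_congr rfl fun r _ => by unfold smax; ring
  rw [hm]
  unfold smax
  field_simp

/-- One attention row along a line: softmax weights with logits `z + s b` averaging the affine
values `c + s α`. -/
lemma rowJet {T : ℕ} (z b c α : Fin T → ℝ) {β γ δ : ℝ} (hβ : 0 ≤ β) (hγ : 0 ≤ γ) (hδ : 0 ≤ δ)
    (hb : ∀ t, |b t| ≤ β) (hc : ∀ t, |c t| ≤ γ) (hα : ∀ t, |α t| ≤ δ) :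
    TwoJet (fun s => ∑ t, smax (fun r => z r + s * b r) t * (c t + s * α t))
      (2 * β * γ + δ) (6 * β ^ 2 * γ + 4 * β * δ) := by
  let q : ℝ → Fin T → ℝ := fun s => smax (fun r => z r + s * b r)
  let m : ℝ → ℝ := fun s => ∑ r, q s r * b r
  let m' : ℝ → ℝ := fun s => ∑ r, q s r * ((b r - m s) * b r)
  have hq : ∀ t s, HasDerivAt (fun s => q s t) (q s t * (b t - m s)) s :=
    fun t s => hasDerivAt_smax z b t s
  have hm : ∀ s, HasDerivAt m (m' s) s := fun s =>
    (HasDerivAt.fun_sum (u := Finset.univ) fun r _ => (hq r s).mul_const (b r)).congr_deriv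
      (Finset.sum_congr rfl fun r _ => by ring)
  have hl : ∀ t s, HasDerivAt (fun s => c t + s * α t) (α t) s := fun t s => by
    simpa using ((hasDerivAt_id s).mul_const (α t)).const_add (c t)
  have hm0 : |m 0| ≤ β := abs_sum_smax_mul_le _ _ hβ hb
  have hbm : ∀ t, |b t - m 0| ≤ 2 * β := fun t =>
    (abs_sub _ _).trans (by linarith [hb t])
  have hdm0 : |m' 0| ≤ 2 * β ^ 2 := abs_sum_smax_mul_le _ _ (by positivity) fun t => by
    rw [abs_mul]
    calc _ ≤ 2 * β * β := mul_le_mul (hbm t) (hb t) (abs_nonneg _) (by positivity)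
      _ = _ := by ring
  refine ⟨fun s => ∑ t, q s t * ((b t - m s) * (c t + s * α t) + α t),
    fun s => ∑ t, q s t * (((b t - m s) ^ 2 - m' s) * (c t + s * α t) + 2 * (b t - m s) * α t),
    fun s => ?_, fun s => ?_, ?_, ?_⟩
  · exact (HasDerivAt.fun_sum (u := Finset.univ) fun t _ => (hq t s).mul (hl t s)).congr_deriv
      (Finset.sum_congr rfl fun t _ => by ring)
  · refine (HasDerivAt.fun_sum (u := Finset.univ) fun t _ => (hq t s).mul
      ((((hm s).const_sub (b t)).mul (hl t s)).add_const (α t))).congr_deriv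
      (Finset.sum_congr rfl fun t _ => ?_)
    simp only [Pi.mul_apply]
    ring
  · refine abs_sum_smax_mul_le _ _ (by positivity) fun t => ?_
    simp only [zero_mul, add_zero]
    refine (abs_add_le _ _).trans (add_le_add ?_ (hα t))
    rw [abs_mul]
    exact mul_le_mul (hbm t) (hc t) (abs_nonneg _) (by positivity)
  · refine abs_sum_smax_mul_le _ _ (by positivity) fun t => ?_
    simp only [zero_mul, add_zero]
    refine (abs_add_le _ _).trans (add_le_add ?_ ?_)
    · rw [abs_mul]
      refine mul_le_mul ?_ (hc t) (abs_nonneg _) (by positivity)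
      refine (abs_sub _ _).trans ?_
      rw [abs_pow]
      have : |b t - m 0| ^ 2 ≤ (2 * β) ^ 2 := by gcongr; exact hbm t
      nlinarith
    · rw [abs_mul, abs_mul, abs_two]
      have := mul_le_mul (hbm t) (hα t) (abs_nonneg _) (by positivity)
      nlinarith

/-! ### Norm estimates for one head -/

lemma abs_sum_mul_le_sqrt {ι : Type*} [Fintype ι] (f g : ι → ℝ) :
    |∑ i, f i * g i| ≤ Real.sqrt (∑ i, f i ^ 2) * Real.sqrt (∑ i, g i ^ 2) := by
  rw [← Real.sqrt_mul (Finset.sum_nonneg fun i _ => sq_nonneg _)]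
  exact Real.abs_le_sqrt (Finset.sum_mul_sq_le_sq_mul_sq _ _ _)

/-- Sum of row norms against the Frobenius norm. -/
lemma sum_row_norm_le {T d : ℕ} (U : Fin T → Fin d → ℝ) :
    ∑ t, Real.sqrt (∑ j, U t j ^ 2) ≤
      Real.sqrt T * Real.sqrt (∑ t, ∑ j, U t j ^ 2) := by
  have h := abs_sum_mul_le_sqrt (fun _ : Fin T => (1 : ℝ)) fun t => Real.sqrt (∑ j, U t j ^ 2)
  have e : ∀ t, Real.sqrt (∑ j, U t j ^ 2) ^ 2 = ∑ j, U t j ^ 2 := fun t =>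
    Real.sq_sqrt (Finset.sum_nonneg fun j _ => sq_nonneg _)
  simp only [one_mul, e, one_pow, Finset.sum_const, Finset.card_univ, Fintype.card_fin,
    nsmul_eq_mul, mul_one] at h
  exact (le_abs_self _).trans h

/-- The bilinear form `xᵀ B y` is bounded by `R² ‖B‖_F`. -/
lemma abs_bilin_le {d : ℕ} (x w : Fin d → ℝ) (B : Fin d → Fin d → ℝ) {R : ℝ}
    (hx : Real.sqrt (∑ j, x j ^ 2) ≤ R) (hw : Real.sqrt (∑ j, w j ^ 2) ≤ R) :
    |∑ j, ∑ k, x j * B j k * w k| ≤ R ^ 2 * Real.sqrt (∑ j, ∑ k, B j k ^ 2) := by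
  have h := abs_sum_mul_le_sqrt (fun p : Fin d × Fin d => x p.1 * w p.2) fun p => B p.1 p.2
  simp only [Fintype.sum_prod_type, mul_pow] at h
  rw [← Finset.sum_mul_sum, Real.sqrt_mul (Finset.sum_nonneg fun i _ => sq_nonneg _)] at h
  have e : ∑ j, ∑ k, x j * B j k * w k = ∑ j, ∑ k, x j * w k * B j k :=
    Finset.sum_congr rfl fun j _ => Finset.sum_congr rfl fun k _ => by ring
  rw [e]
  refine h.trans (mul_le_mul_of_nonneg_right ?_ (Real.sqrt_nonneg _))
  rw [sq]
  exact mul_le_mul hx hw (Real.sqrt_nonneg _) ((Real.sqrt_nonneg _).trans hx)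

/-- One head along a line, in terms of the Frobenius norms of `U` and of the directions
`A` (for `U`) and `B` (for `W`). -/
lemma attnJet {T d : ℕ} (X U A : Fin T → Fin d → ℝ) (W B : Fin d → Fin d → ℝ) {R : ℝ}
    (hR : 0 ≤ R) (hX : ∀ t, Real.sqrt (∑ j, X t j ^ 2) ≤ R) :
    TwoJet (fun s => attnPhi X (fun t j => U t j + s * A t j) (fun j k => W j k + s * B j k))
      (Real.sqrt T * R * (2 * R ^ 2 * Real.sqrt (∑ t, ∑ j, U t j ^ 2) *
        Real.sqrt (∑ j, ∑ k, B j k ^ 2) + Real.sqrt (∑ t, ∑ j, A t j ^ 2)))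
      (Real.sqrt T * R ^ 3 * (6 * R ^ 2 * Real.sqrt (∑ t, ∑ j, U t j ^ 2) *
        Real.sqrt (∑ j, ∑ k, B j k ^ 2) ^ 2 + 4 * Real.sqrt (∑ t, ∑ j, A t j ^ 2) *
          Real.sqrt (∑ j, ∑ k, B j k ^ 2))) := by
  have hU := sum_row_norm_le U
  have hA := sum_row_norm_le A
  set nB := Real.sqrt (∑ j, ∑ k, B j k ^ 2) with hnB
  have hB0 : 0 ≤ nB := Real.sqrt_nonneg _
  have row : ∀ t, TwoJet (fun s => ∑ t', smax (attnScores X (fun j k => W j k + s * B j k) t) t' *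
        ∑ j, (U t j + s * A t j) * X t' j)
      (2 * (R ^ 2 * nB) * (Real.sqrt (∑ j, U t j ^ 2) * R) + Real.sqrt (∑ j, A t j ^ 2) * R)
      (6 * (R ^ 2 * nB) ^ 2 * (Real.sqrt (∑ j, U t j ^ 2) * R) +
        4 * (R ^ 2 * nB) * (Real.sqrt (∑ j, A t j ^ 2) * R)) := by
    intro t
    have h := rowJet (attnScores X W t) (attnScores X B t) (fun t' => ∑ j, U t j * X t' j)
      (fun t' => ∑ j, A t j * X t' j) (β := R ^ 2 * nB) (γ := Real.sqrt (∑ j, U t j ^ 2) * R)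
      (δ := Real.sqrt (∑ j, A t j ^ 2) * R) (by positivity) (by positivity) (by positivity)
      (fun t' => abs_bilin_le _ _ _ (hX t) (hX t'))
      (fun t' => (abs_sum_mul_le_sqrt _ _).trans
        (mul_le_mul_of_nonneg_left (hX t') (Real.sqrt_nonneg _)))
      (fun t' => (abs_sum_mul_le_sqrt _ _).trans
        (mul_le_mul_of_nonneg_left (hX t') (Real.sqrt_nonneg _)))
    convert h using 2 with s
    refine Finset.sum_congr rfl fun t' _ => ?_
    congr 1
    · congr 1
      funext r
      simp only [attnScores, Finset.mul_sum, ← Finset.sum_add_distrib]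
      exact Finset.sum_congr rfl fun j _ => Finset.sum_congr rfl fun k _ => by ring
    · simp only [Finset.mul_sum, ← Finset.sum_add_distrib]
      exact Finset.sum_congr rfl fun j _ => by ring
  refine (TwoJet.sum row).mono ?_ ?_
  · rw [Finset.sum_add_distrib, ← Finset.mul_sum, ← Finset.sum_mul, ← Finset.sum_mul]
    calc _ ≤ 2 * (R ^ 2 * nB) * (Real.sqrt T * Real.sqrt (∑ t, ∑ j, U t j ^ 2) * R) +
          Real.sqrt T * Real.sqrt (∑ t, ∑ j, A t j ^ 2) * R := by gcongr
      _ = _ := by ring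
  · rw [Finset.sum_add_distrib, ← Finset.mul_sum, ← Finset.mul_sum, ← Finset.sum_mul,
      ← Finset.sum_mul]
    calc _ ≤ 6 * (R ^ 2 * nB) ^ 2 * (Real.sqrt T * Real.sqrt (∑ t, ∑ j, U t j ^ 2) * R) +
          4 * (R ^ 2 * nB) * (Real.sqrt T * Real.sqrt (∑ t, ∑ j, A t j ^ 2) * R) := by gcongr
      _ = _ := by ring

/-- Euclidean norm of the parameters of head `h`. -/
noncomputable def headNorm {T d H : ℕ} (θ : Params T d H) (h : Fin H) : ℝ :=
  Real.sqrt (∑ p : HeadIx T d, θ (h, p) ^ 2)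

lemma headNorm_nonneg {T d H : ℕ} (θ : Params T d H) (h : Fin H) : 0 ≤ headNorm θ h :=
  Real.sqrt_nonneg _

lemma headNorm_le_max {T d H : ℕ} (θ : Params T d H) (h : Fin H) :
    headNorm θ h ≤ maxHeadNorm θ :=
  le_ciSup (f := fun h => headNorm θ h) (Set.finite_range _).bddAbove h

lemma maxHeadNorm_nonneg {T d H : ℕ} (θ : Params T d H) : 0 ≤ maxHeadNorm θ :=
  Real.iSup_nonneg fun h => headNorm_nonneg θ h

lemma headNorm_sq {T d H : ℕ} (θ : Params T d H) (h : Fin H) :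
    headNorm θ h ^ 2 = Real.sqrt (∑ t, ∑ j, headU θ h t j ^ 2) ^ 2 +
      Real.sqrt (∑ j, ∑ k, headW θ h j k ^ 2) ^ 2 := by
  unfold headNorm
  rw [Real.sq_sqrt (by positivity), Real.sq_sqrt (by positivity), Real.sq_sqrt (by positivity),
    Fintype.sum_sum_type, Fintype.sum_prod_type, Fintype.sum_prod_type]
  rfl

lemma sum_headNorm_sq {T d H : ℕ} (θ : Params T d H) : ∑ h, headNorm θ h ^ 2 = ‖θ‖ ^ 2 := by
  rw [EuclideanSpace.real_norm_sq_eq, Fintype.sum_prod_type]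
  exact Finset.sum_congr rfl fun h _ => Real.sq_sqrt (by positivity)

lemma beta1_nonneg {T d H : ℕ} {R : ℝ} (hR : 0 ≤ R) (θ : Params T d H) : 0 ≤ beta1 R θ := by
  have := maxHeadNorm_nonneg θ
  unfold beta1; positivity

lemma headJet {T d H : ℕ} (hd : 0 < d) (X : Fin T → Fin d → ℝ) {R : ℝ} (hR : 0 ≤ R)
    (hX : ∀ t, Real.sqrt (∑ j, X t j ^ 2) ≤ R) (θ v : Params T d H) (h : Fin H) :
    TwoJet (fun s : ℝ => attnPhi X (headU (θ + s • v) h) (headW (θ + s • v) h))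
      (beta1 R θ * headNorm v h) (beta3 R θ * headNorm v h ^ 2) := by
  have key := attnJet X (headU θ h) (headU v h) (headW θ h) (headW v h) hR hX
  have sθ := headNorm_sq θ h
  have sv := headNorm_sq v h
  set a := Real.sqrt (∑ t, ∑ j, headU v h t j ^ 2)
  set b := Real.sqrt (∑ j, ∑ k, headW v h j k ^ 2)
  set u := Real.sqrt (∑ t, ∑ j, headU θ h t j ^ 2)
  have ha : 0 ≤ a := Real.sqrt_nonneg _
  have hb : 0 ≤ b := Real.sqrt_nonneg _
  have hu : 0 ≤ u := Real.sqrt_nonneg _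
  have hr := headNorm_nonneg v h
  have hM := maxHeadNorm_nonneg θ
  have huM : u ≤ maxHeadNorm θ :=
    (abs_le_of_sq_le_sq' (by rw [sθ]; exact le_add_of_nonneg_right (sq_nonneg _))
      (headNorm_nonneg θ h)).2.trans (headNorm_le_max θ h)
  have har : a ≤ headNorm v h := by nlinarith
  have hbr : b ≤ headNorm v h := by nlinarith
  refine TwoJet.mono (F := fun s : ℝ => attnPhi X (headU (θ + s • v) h) (headW (θ + s • v) h))
    key ?_ ?_
  · unfold beta1
    calc _ ≤ Real.sqrt T * R * (2 * R ^ 2 * maxHeadNorm θ * headNorm v h + headNorm v h) := by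
          gcongr
      _ = _ := by ring
  · unfold beta3
    have hd1 : (1 : ℝ) ≤ d := by exact_mod_cast hd
    have hs1 : (1 : ℝ) ≤ Real.sqrt d := Real.one_le_sqrt.2 hd1
    have hTd : Real.sqrt T ≤ d * Real.sqrt (T * d) := by
      rw [Real.sqrt_mul (Nat.cast_nonneg T)]
      have h1 : Real.sqrt T * 1 ≤ Real.sqrt T * Real.sqrt d := by gcongr
      have h2 : 1 * (Real.sqrt T * Real.sqrt d) ≤ d * (Real.sqrt T * Real.sqrt d) := by gcongr
      linarith
    have h4 : 4 * a * b ≤ 2 * headNorm v h ^ 2 := by nlinarith [sq_nonneg (a - b)]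
    calc _ ≤ Real.sqrt T * R ^ 3 * (6 * R ^ 2 * maxHeadNorm θ * headNorm v h ^ 2 +
            2 * headNorm v h ^ 2) := by gcongr
      _ = Real.sqrt T * (R ^ 3 * (3 * 1 * R ^ 2 * maxHeadNorm θ + 1) *
            (2 * headNorm v h ^ 2)) := by ring
      _ ≤ (d * Real.sqrt (T * d)) * (R ^ 3 * (3 * Real.sqrt d * R ^ 2 * maxHeadNorm θ + 1) *
            (2 * headNorm v h ^ 2)) := by gcongr
      _ = _ := by ring

/-! ### The multi-head model -/

lemma mhJet {T d H : ℕ} (hd : 0 < d) (X : Fin T → Fin d → ℝ) {R : ℝ} (hR : 0 ≤ R)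
    (hX : ∀ t, Real.sqrt (∑ j, X t j ^ 2) ≤ R) (θ v : Params T d H) :
    TwoJet (fun s : ℝ => mhPhi X (θ + s • v))
      (beta1 R θ * ‖v‖) (beta3 R θ / Real.sqrt H * ‖v‖ ^ 2) := by
  refine ((TwoJet.sum fun h => headJet hd X hR hX θ v h).const_mul
    (k := 1 / Real.sqrt H) (by positivity)).mono ?_ ?_
  · rw [← Finset.mul_sum]
    have h := abs_sum_mul_le_sqrt (fun _ : Fin H => (1 : ℝ)) (headNorm v)
    rw [sum_headNorm_sq, Real.sqrt_sq (norm_nonneg v)] at h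
    simp only [one_mul, one_pow, Finset.sum_const, Finset.card_univ, Fintype.card_fin,
      nsmul_eq_mul, mul_one] at h
    have h' := (le_abs_self _).trans h
    have hβ := beta1_nonneg hR θ
    calc _ ≤ 1 / Real.sqrt H * (beta1 R θ * (Real.sqrt H * ‖v‖)) := by gcongr
      _ = (Real.sqrt H / Real.sqrt H) * (beta1 R θ * ‖v‖) := by ring
      -- An inequality suffices here, so `H = 0`, where the quotient is `0`, needs no separate case.
      _ ≤ 1 * (beta1 R θ * ‖v‖) := by gcongr; exact div_self_le_one _
      _ = _ := one_mul _
  · rw [← Finset.mul_sum, sum_headNorm_sq]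
    exact le_of_eq (by ring)

/-- Spectral-norm bound on the Hessian of the logistic empirical
risk of the multi-head attention model: under the bounded-data assumption, for every
`θ̃`, `‖∇²L̂(θ̃)‖ ≤ β₃(θ̃)/√H + β₁(θ̃)²/4`. Since the Hessian is symmetric, the
spectral norm bound is expressed through its quadratic form: for every direction
`v`, the second derivative of `s ↦ L̂(θ̃ + s v)` at `0` (which equals `vᵀ ∇²L̂(θ̃) v`)
is bounded in absolute value by `(β₃(θ̃)/√H + β₁(θ̃)²/4) ‖v‖²`. -/
theorem empirical_risk_hessian_bound {T d H n : ℕ} (hn : 0 < n)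
    (X : Fin n → Fin T → Fin d → ℝ) (y : Fin n → ℝ) (R : ℝ)
    (hdata : BoundedData X y R) :
    ∀ (θ v : Params T d H),
      |iteratedDeriv 2 (fun s : ℝ => empLoss X y (θ + s • v)) 0| ≤
        (beta3 R θ / Real.sqrt H + beta1 R θ ^ 2 / 4) * ‖v‖ ^ 2 := by
  intro θ v
  obtain ⟨hR1, hy, hX⟩ := hdata
  have hR : 0 ≤ R := zero_le_one.trans hR1
  rcases Nat.eq_zero_or_pos d with rfl | hd
  · -- For `d = 0` there are no parameters, so `v = 0` and the risk is constant along the line.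
    have hv : v = 0 := by
      ext ⟨h, p⟩
      rcases p with ⟨_, j⟩ | ⟨j, _⟩ <;> exact j.elim0
    subst hv
    simp [iteratedDeriv_succ]
  · have J := (TwoJet.sum fun i => (mhJet hd (X i) hR (hX i) θ v).logistic (hy i)).const_mul
      (k := 1 / (n : ℝ)) (by positivity)
    refine J.iteratedDeriv_le.trans (le_of_eq ?_)
    have hn' : (n : ℝ) ≠ 0 := by exact_mod_cast hn.ne'
    simp only [Finset.sum_const, Finset.card_univ, Fintype.card_fin, nsmul_eq_mul]
    field_simp
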